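/- Weyl relation in the factorized space (part of Schwinger's factorization theorem): let N₁, N₂ be positive integers with gcd(N₁, N₂) = 1, N = N₁ · N₂, and let r₁, r₂ be integers with r₁·N₂ + r₂·N₁ ≡ 1 (mod N). Set V = V₁ ⊗ V₂ and U = U₁^{r₁} ⊗ U₂^{r₂} (Kronecker products of matrices indexed by ZMod N₁ × ZMod N₂). Then V * U = exp(2πi/N) • (U * V). -/

import Mathlib

/-!
Clock matrices are diagonal matrices of additive characters, and translation by `g` commutes with
the matrix of a character `χ` up to the scalar `χ g`. Kronecker products multiply such scalars, so
the claim reduces to `ω_{N₁} ^ r₁ * ω_{N₂} ^ r₂ = ω_{N₁ N₂}`. Since `ω_{N₁} = ω_{N₁ N₂} ^ N₂` and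
`ω_{N₂} = ω_{N₁ N₂} ^ N₁`, the left-hand side is `ω_{N₁ N₂} ^ (r₁ N₂ + r₂ N₁)`, whose exponent
is `1` modulo `N₁ N₂`.
-/

/-- The matrix of translation by `g`, acting on column vectors by `f ↦ fun a ↦ f (a + g)`.
For `G = ZMod N` and `g = 1` it is the shift matrix `V`. -/
def translationMatrix {G : Type*} [DecidableEq G] [Add G] (R : Type*) [Zero R] [One R] (g : G) :
    Matrix G G R :=
  Matrix.of fun a b ↦ if b = a + g then 1 else 0

theorem translationMatrix_mul_diagonal_addChar {G R : Type*} [Fintype G] [DecidableEq G]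
    [AddMonoid G] [CommSemiring R] (g : G) (χ : AddChar G R) :
    translationMatrix R g * Matrix.diagonal χ =
      χ g • (Matrix.diagonal χ * translationMatrix R g) := by
  ext a b
  rw [Matrix.mul_diagonal, Matrix.smul_apply, Matrix.diagonal_mul, translationMatrix,
    Matrix.of_apply]
  split_ifs with hb
  · rw [hb, χ.map_add_eq_mul, one_mul, mul_one, smul_eq_mul, mul_comm]
  · rw [zero_mul, mul_zero, smul_zero]

/-- The embedding of the additive characters of `G` into matrices as diagonal matrices. As a
homomorphism out of a group it takes values in the invertible matrices. -/
def diagonalAddCharHom (G R : Type*) [Fintype G] [DecidableEq G] [AddCommGroup G] [CommSemiring R] :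
    AddChar G R →* Matrix G G R where
  toFun χ := Matrix.diagonal χ
  map_one' := Matrix.diagonal_one
  map_mul' χ ψ := (Matrix.diagonal_mul_diagonal χ ψ).symm

theorem diagonal_addChar_zpow {G R : Type*} [Fintype G] [DecidableEq G] [AddCommGroup G]
    [CommRing R] (χ : AddChar G R) (n : ℤ) :
    Matrix.diagonal χ ^ n = Matrix.diagonal (χ ^ n : AddChar G R) := by
  let toUnits : AddChar G R →* (Matrix G G R)ˣ := (diagonalAddCharHom G R).toHomUnits
  calc Matrix.diagonal χ ^ n = ((toUnits χ ^ n : (Matrix G G R)ˣ) : Matrix G G R) :=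
        (Matrix.coe_units_zpow (toUnits χ) n).symm
    _ = toUnits (χ ^ n) := by rw [map_zpow]
    _ = Matrix.diagonal (χ ^ n : AddChar G R) := rfl

open Kronecker in
theorem kronecker_mul_kronecker_eq_smul {m n R : Type*} [Fintype m] [Fintype n] [CommSemiring R]
    {A B : Matrix m m R} {C D : Matrix n n R} {p q : R}
    (hAB : A * B = p • (B * A)) (hCD : C * D = q • (D * C)) :
    (A ⊗ₖ C) * (B ⊗ₖ D) = (p * q) • ((B ⊗ₖ D) * (A ⊗ₖ C)) := by
  rw [← Matrix.mul_kronecker_mul, ← Matrix.mul_kronecker_mul, hAB, hCD, Matrix.smul_kronecker,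
    Matrix.kronecker_smul, smul_smul]

theorem addChar_zpow_apply_one {A M : Type*} [AddCommGroupWithOne A] [DivisionCommMonoid M]
    (χ : AddChar A M) (r : ℤ) : (χ ^ r) 1 = χ (r : A) := by
  rw [AddChar.zpow_apply, ← AddChar.map_zsmul_eq_zpow, zsmul_one]

section StdAddChar

variable {N : ℕ} [NeZero N]

theorem exp_pow_val_eq_stdAddChar (a : ZMod N) :
    Complex.exp (2 * Real.pi * Complex.I / N) ^ a.val = ZMod.stdAddChar a := by
  rw [← Complex.exp_nat_mul, ZMod.stdAddChar_apply, ZMod.toCircle_apply]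
  congr 1
  ring

theorem stdAddChar_one :
    ZMod.stdAddChar (1 : ZMod N) = Complex.exp (2 * Real.pi * Complex.I / N) := by
  simpa using ZMod.stdAddChar_coe (N := N) 1

theorem stdAddChar_intCast_mul_natCast {L M : ℕ} [NeZero L] [NeZero M] (hN : N = L * M) (r : ℤ) :
    ZMod.stdAddChar ((r * M : ℤ) : ZMod N) = ZMod.stdAddChar (r : ZMod L) := by
  have hM : (M : ℂ) ≠ 0 := Nat.cast_ne_zero.mpr (NeZero.ne M)
  rw [ZMod.stdAddChar_coe, ZMod.stdAddChar_coe, hN]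
  push_cast
  rw [← mul_assoc, mul_div_mul_right _ _ hM]

theorem stdAddChar_mul_stdAddChar {L M : ℕ} [NeZero L] [NeZero M] (r s : ℤ) :
    ZMod.stdAddChar (r : ZMod L) * ZMod.stdAddChar (s : ZMod M) =
      ZMod.stdAddChar ((r * M + s * L : ℤ) : ZMod (L * M)) := by
  rw [Int.cast_add, AddChar.map_add_eq_mul, stdAddChar_intCast_mul_natCast rfl,
    stdAddChar_intCast_mul_natCast (mul_comm L M)]

end StdAddChar

section Clock

/-- The clock matrix `U` of size `N`, with diagonal entries `exp (2πi/N) ^ a`, encoded as the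
diagonal matrix of the standard additive character of `ZMod N`. -/
noncomputable def clockMatrix (N : ℕ) [NeZero N] : Matrix (ZMod N) (ZMod N) ℂ :=
  Matrix.diagonal (ZMod.stdAddChar (N := N))

variable {N : ℕ} [NeZero N]

theorem clockMatrix_apply (a b : ZMod N) :
    clockMatrix N a b =
      if a = b then Complex.exp (2 * Real.pi * Complex.I / N) ^ a.val else 0 := by
  rw [clockMatrix, Matrix.diagonal_apply, exp_pow_val_eq_stdAddChar]

theorem translationMatrix_one_mul_clockMatrix_zpow (r : ℤ) :
    translationMatrix ℂ 1 * clockMatrix N ^ r =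
      ZMod.stdAddChar (r : ZMod N) • (clockMatrix N ^ r * translationMatrix ℂ 1) := by
  rw [clockMatrix, diagonal_addChar_zpow, translationMatrix_mul_diagonal_addChar,
    addChar_zpow_apply_one]

end Clock

open Kronecker in
/-- Weyl relation in the factorized space: for coprime `N₁, N₂` with `N = N₁·N₂` and
integers `r₁, r₂` with `r₁·N₂ + r₂·N₁ ≡ 1 (mod N)`, setting `V = V₁ ⊗ V₂` and
`U = U₁^{r₁} ⊗ U₂^{r₂}`, one has `V * U = exp(2πi/N) • (U * V)`. -/
theorem factorized_weyl_relation (N₁ N₂ : ℕ) [NeZero N₁] [NeZero N₂]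
    (hcop : Nat.gcd N₁ N₂ = 1)
    (r₁ r₂ : ℤ)
    (hr : r₁ * N₂ + r₂ * N₁ ≡ 1 [ZMOD ((N₁ : ℤ) * N₂)])
    (V₁ U₁ : Matrix (ZMod N₁) (ZMod N₁) ℂ)
    (hV₁ : ∀ a b : ZMod N₁, V₁ a b = if b = a + 1 then 1 else 0)
    (hU₁ : ∀ a b : ZMod N₁,
      U₁ a b = if a = b then Complex.exp (2 * Real.pi * Complex.I / N₁) ^ a.val else 0)
    (V₂ U₂ : Matrix (ZMod N₂) (ZMod N₂) ℂ)
    (hV₂ : ∀ a b : ZMod N₂, V₂ a b = if b = a + 1 then 1 else 0)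
    (hU₂ : ∀ a b : ZMod N₂,
      U₂ a b = if a = b then Complex.exp (2 * Real.pi * Complex.I / N₂) ^ a.val else 0) :
    (V₁ ⊗ₖ V₂) * ((U₁ ^ r₁) ⊗ₖ (U₂ ^ r₂)) =
      Complex.exp (2 * Real.pi * Complex.I / (N₁ * N₂ : ℕ)) •
        (((U₁ ^ r₁) ⊗ₖ (U₂ ^ r₂)) * (V₁ ⊗ₖ V₂)) := by
  obtain rfl : V₁ = translationMatrix ℂ 1 := Matrix.ext hV₁
  obtain rfl : V₂ = translationMatrix ℂ 1 := Matrix.ext hV₂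
  obtain rfl : U₁ = clockMatrix N₁ := Matrix.ext fun a b ↦ by rw [hU₁, clockMatrix_apply]
  obtain rfl : U₂ = clockMatrix N₂ := Matrix.ext fun a b ↦ by rw [hU₂, clockMatrix_apply]
  have exponent_eq_one : ((r₁ * N₂ + r₂ * N₁ : ℤ) : ZMod (N₁ * N₂)) = 1 := by
    rw [← Int.cast_one, ZMod.intCast_eq_intCast_iff, Nat.cast_mul]
    exact hr
  rw [kronecker_mul_kronecker_eq_smul (translationMatrix_one_mul_clockMatrix_zpow r₁)
    (translationMatrix_one_mul_clockMatrix_zpow r₂), stdAddChar_mul_stdAddChar, exponent_eq_one,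
    stdAddChar_one]
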